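/- In a quasi-homogeneous network (θ_i = θ, L_i = L for all nodes, ξ_{ij} = ξ > 0 for all arcs), if the directed graph G contains no k-core with k = ⌈(L − θ)/ξ⌉ (i.e., every nonempty induced subgraph has a node of in-degree less than k within it), then the iterative construction S_1 ⊆ S_1 ∪ S_2 ⊆ … with S_1 = {i : L ≥ θ + ξ·|N⁻(i)|} and S_{m+1} = {i ∉ S̄_m : L ≥ θ + ξ·|N⁻(i) \ S̄_m| − ξ·|N⁺(i) ∩ S̄_m|} exhausts N, i.e., there exists ℓ with S̄_ℓ = N. -/

import Mathlib

open Finset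

/-- In-neighbors of `i`: players `j` with an arc `(j, i)`. -/
def inN {V : Type*} [Fintype V] (A : V → V → Prop) [DecidableRel A] (i : V) : Finset V :=
  Finset.univ.filter fun j => A j i

/-- Out-neighbors of `i`: players `j` with an arc `(i, j)`. -/
def outN {V : Type*} [Fintype V] (A : V → V → Prop) [DecidableRel A] (i : V) : Finset V :=
  Finset.univ.filter fun j => A i j

/-- One step of the iterative construction in a quasi-homogeneous network: to
the current set `B = S̄_m` of secured players, add all players `i ∉ B` with
`L ≥ θ + ξ·|N⁻(i) \ B| − ξ·|N⁺(i) ∩ B|`.  (On `B = ∅` this is exactly the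
condition defining `S_1`.) -/
noncomputable def qStep {V : Type*} [Fintype V] [DecidableEq V]
    (A : V → V → Prop) [DecidableRel A] (θ L ξ : ℝ) (B : Finset V) : Finset V :=
  B ∪ Finset.univ.filter (fun i => i ∉ B ∧
    θ + ξ * ((inN A i \ B).card : ℝ) - ξ * ((outN A i ∩ B).card : ℝ) ≤ L)

/-!
The sets `S̄_m` increase in the finite set `N`, so they stabilize. At a fixed point `B` every
player `i ∉ B` fails the test `θ + ξ·|N⁻(i) \ B| − ξ·|N⁺(i) ∩ B| ≤ L`. Discarding the nonnegative
out-neighbor term leaves `|N⁻(i) \ B| > (L − θ)/ξ`, and `|N⁻(i) \ B|` is the in-degree of `i` inside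
the complement of `B`. A nonempty complement is therefore a `⌈(L − θ)/ξ⌉`-core.
-/

theorem exists_isFixedPt_iterate {α : Type*} [PartialOrder α] [WellFoundedGT α] {f : α → α}
    (hf : id ≤ f) (a : α) : ∃ n : ℕ, Function.IsFixedPt f (f^[n] a) := by
  obtain ⟨n, hn⟩ := WellFoundedGT.monotone_chain_condition
    ⟨fun m => f^[m] a, fun _ _ h => Function.monotone_iterate_of_id_le hf h a⟩
  refine ⟨n, ?_⟩
  rw [Function.IsFixedPt, ← Function.iterate_succ_apply' f n a]
  exact (hn (n + 1) n.le_succ).symm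

section QuasiHomogeneous

variable {V : Type*} [Fintype V] [DecidableEq V] {A : V → V → Prop} [DecidableRel A]

variable (A) in
/-- The subgraph induced on `H` is a `k`-core: it is nonempty and each of its nodes has in-degree
at least `k` within it. The subgraph is represented by its node set. -/
def IsKCore (k : ℕ) (H : Finset V) : Prop :=
  H.Nonempty ∧ ∀ i ∈ H, k ≤ (inN A i ∩ H).card

variable {θ L ξ : ℝ} {B : Finset V}

theorem subset_qStep : B ⊆ qStep A θ L ξ B :=
  subset_union_left

theorem lt_of_notMem_qStep {i : V} (hi : i ∉ qStep A θ L ξ B) :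
    L < θ + ξ * ((inN A i \ B).card : ℝ) - ξ * ((outN A i ∩ B).card : ℝ) := by
  by_contra! h
  exact hi (mem_union_right _ (mem_filter.mpr ⟨mem_univ i, fun hB => hi (subset_qStep hB), h⟩))

theorem ceil_le_card_inN_inter_compl_of_notMem_qStep (hξ : 0 < ξ) {i : V}
    (hi : i ∉ qStep A θ L ξ B) : ⌈(L - θ) / ξ⌉₊ ≤ (inN A i ∩ Bᶜ).card := by
  have hfail := lt_of_notMem_qStep hi
  have hout : 0 ≤ ξ * ((outN A i ∩ B).card : ℝ) := by positivity
  rw [← sdiff_eq_inter_compl, Nat.ceil_le, div_le_iff₀' hξ]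
  linarith

theorem isKCore_compl_of_isFixedPt_qStep (hξ : 0 < ξ)
    (hfix : Function.IsFixedPt (qStep A θ L ξ) B) (hB : B ≠ univ) :
    IsKCore A ⌈(L - θ) / ξ⌉₊ Bᶜ := by
  refine ⟨by rwa [nonempty_iff_ne_empty, ne_eq, compl_eq_empty_iff], fun i hi => ?_⟩
  apply ceil_le_card_inN_inter_compl_of_notMem_qStep hξ
  rwa [hfix.eq, ← mem_compl]

end QuasiHomogeneous

/-- in a quasi-homogeneous network (`θ_i = θ`, `L_i = L`,
`ξ_{ij} = ξ > 0`), if `G` contains no `k`-core with `k = ⌈(L−θ)/ξ⌉` — every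
nonempty induced subgraph has a node of within-subgraph in-degree `< k` —
then the iterative construction `S̄_1 ⊆ S̄_2 ⊆ …` exhausts `N`:
`S̄_ℓ = N` for some `ℓ`. -/
theorem quasi_homogeneous_agreeable_exists {V : Type*} [Fintype V] [DecidableEq V]
    (A : V → V → Prop) [DecidableRel A] (θ L ξ : ℝ)
    (hθ : 0 ≤ θ) (hL : 0 ≤ L) (hξ : 0 < ξ) (hLθ : θ ≤ L)
    (hnocore : ∀ H : Finset V, H.Nonempty →
      ∃ i ∈ H, ((inN A i ∩ H).card : ℕ) < ⌈(L - θ) / ξ⌉₊) :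
    ∃ ℓ : ℕ, (qStep A θ L ξ)^[ℓ] ∅ = Finset.univ := by
  obtain ⟨n, hfix⟩ := exists_isFixedPt_iterate (f := qStep A θ L ξ) (fun _ => subset_qStep) ∅
  refine ⟨n, by_contra fun hne => ?_⟩
  obtain ⟨hnonempty, hcore⟩ := isKCore_compl_of_isFixedPt_qStep hξ hfix hne
  obtain ⟨i, hi, hlt⟩ := hnocore _ hnonempty
  exact hlt.not_ge (hcore i hi)
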